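/- arXiv:2106.03120 — 3 statements merged into one kernel-verified Lean document; each statement's English description precedes it below -/
import Mathlib

section
/- Let (𝔩,𝔪) be a permissible pair with the algorithm notations in place. Then for each fixed index i ∈ I, the local count D_i(𝔩,𝔪) = |ν(𝔩,𝔪)₁ ∩ ({i}×I)| − |ν(𝔩,𝔪)₂ ∩ ({i}×I)| + |ν(𝔩,𝔪)₃ ∩ ({i}×J)| equals 1. -/
/-- A *segment* `Δ(a,b)`: a pair of integers `a ≤ b`.  `b` is the begin point
and `e` the end point. -/
structure Segment where
  b : ℤ
  e : ℤ
  le : b ≤ e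

namespace Segment

/-- `Δ₁ ≪ Δ₂` : `b(Δ₁) < b(Δ₂)` and `e(Δ₁) < e(Δ₂)`. -/
def ll (Δ₁ Δ₂ : Segment) : Prop := Δ₁.b < Δ₂.b ∧ Δ₁.e < Δ₂.e

/-- `Δ₁ ≺ Δ₂` : `b(Δ₁) < b(Δ₂)`, `e(Δ₁) < e(Δ₂)` and `e(Δ₁) ≥ b(Δ₂) - 1`. -/
def prec (Δ₁ Δ₂ : Segment) : Prop := Δ₁.b < Δ₂.b ∧ Δ₁.e < Δ₂.e ∧ Δ₂.b - 1 ≤ Δ₁.e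

/-- `⁻Δ = Δ(a-1, b-1)`. -/
def shiftDown (Δ : Segment) : Segment := ⟨Δ.b - 1, Δ.e - 1, by have := Δ.le; omega⟩

end Segment

/-- The standing data of the inverse Knuth–Viennot algorithm: a nonzero multisegment
`𝔪 = Σ_{i ∈ I} Δ_i` indexed by `I = Fin n` (linearly ordered compatibly with begin
points, ties broken by reversed end points), and a ladder multisegment
`𝔩 = Σ_{t ∈ J} Δ_{j_t}` indexed by `J = Fin l` (`jseg t` is the segment `Δ_{j_{t+1}}`,
enumerated so that `Δ_{j_l} ≪ ⋯ ≪ Δ_{j_1}`), such that the pair `(𝔩, 𝔪)` is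
permissible. -/
structure KVData where
  n : ℕ
  l : ℕ
  npos : 0 < n
  lpos : 0 < l
  iseg : Fin n → Segment
  jseg : Fin l → Segment
  iOrder : ∀ i₁ i₂ : Fin n, i₂ < i₁ →
    (iseg i₂).b < (iseg i₁).b ∨ ((iseg i₂).b = (iseg i₁).b ∧ (iseg i₁).e ≤ (iseg i₂).e)
  ladder : ∀ t t' : Fin l, t < t' → Segment.ll (jseg t') (jseg t)
  permissible : ∀ (m : ℕ) (c : Fin m → Fin n),
    (∀ r s : Fin m, r < s → Segment.ll (iseg (c s)) (iseg (c r))) →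
    ∃ φ : Fin m → Fin l, StrictMono φ ∧
      ∀ t : Fin m, Segment.prec (Segment.shiftDown (iseg (c t))) (jseg (φ t))

namespace KVData

variable (D : KVData)

/-- The segment attached to an index in `I ⊔ J`. -/
def segOf : Fin D.n ⊕ Fin D.l → Segment := Sum.elim D.iseg D.jseg

/-- The set `{t : ⁻Δ_i ≪ Δ_{j_t}}` (0-based positions in the ladder `𝔩`). -/
def dPrimeSet (i : Fin D.n) : Set ℕ :=
  {t : ℕ | ∃ h : t < D.l, Segment.ll (Segment.shiftDown (D.iseg i)) (D.jseg ⟨t, h⟩)}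

/-- The set `{𝔡'(i_k) - k : i = i_0, Δ_{i_{r+1}} ≪ Δ_{i_r}}` whose minimum is `𝔡(i)`. -/
def depthSet (d' : Fin D.n → ℕ) (i : Fin D.n) : Set ℤ :=
  {z : ℤ | ∃ (k : ℕ) (c : ℕ → Fin D.n), c 0 = i ∧
    (∀ r < k, Segment.ll (D.iseg (c (r + 1))) (D.iseg (c r))) ∧
    z = (d' (c k) : ℤ) - (k : ℤ)}

/-- `d'` is the function `𝔡'` and `d` the depth function `𝔡` on `I ⊔ J`
(`𝔡'(i) = max{t : ⁻Δ_i ≪ Δ_{j_t}}`, `𝔡(i) = min{𝔡'(i_k) - k}`, `𝔡(j_t) = t`). -/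
def DepthSpec (d' : Fin D.n → ℕ) (d : Fin D.n ⊕ Fin D.l → ℤ) : Prop :=
  (∀ i, IsGreatest (D.dPrimeSet i) (d' i)) ∧
  (∀ i, IsLeast (D.depthSet d' i) (d (Sum.inl i))) ∧
  (∀ t : Fin D.l, d (Sum.inr t) = (t : ℤ))

/-- `σ` is the permutation of `I ⊔ J` whose disjoint cycles are `(i_1, …, i_s, j_t)`
where `{i_1 > … > i_s} ∪ {j_t} = 𝔡⁻¹(t)`:  an element `i ∈ I` is sent to the largest
element of `I` below it in its fiber of `𝔡`, or to the `J`-element of the fiber if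
there is none; the `J`-element of a fiber is sent to the largest `I`-element of the
fiber, or to itself if there is none. -/
def SigmaSpec (d : Fin D.n ⊕ Fin D.l → ℤ) (σ : Equiv.Perm (Fin D.n ⊕ Fin D.l)) : Prop :=
  (∀ i : Fin D.n,
    (∃ i' : Fin D.n,
        IsGreatest {i'' : Fin D.n | i'' < i ∧ d (Sum.inl i'') = d (Sum.inl i)} i' ∧
        σ (Sum.inl i) = Sum.inl i')
    ∨ ((¬ ∃ i'' : Fin D.n, i'' < i ∧ d (Sum.inl i'') = d (Sum.inl i)) ∧
        ∃ t : Fin D.l, (t : ℤ) = d (Sum.inl i) ∧ σ (Sum.inl i) = Sum.inr t)) ∧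
  (∀ t : Fin D.l,
    (∃ i : Fin D.n,
        IsGreatest {i' : Fin D.n | d (Sum.inl i') = (t : ℤ)} i ∧
        σ (Sum.inr t) = Sum.inl i)
    ∨ ((¬ ∃ i : Fin D.n, d (Sum.inl i) = (t : ℤ)) ∧ σ (Sum.inr t) = Sum.inr t))

/-- `e(Δ♣_x) ≠ e(Δ_x)`, i.e. the end point changes at `x`
(recall `Δ♣_x = Δ(b(Δ_x), e(Δ_{σ(x)}))`). -/
def breaksEnd (σ : Equiv.Perm (Fin D.n ⊕ Fin D.l)) (x : Fin D.n ⊕ Fin D.l) : Prop :=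
  (D.segOf (σ x)).e ≠ (D.segOf x).e

/-- `vee` is the map `x ↦ x^∨`:  `x^∨ = σ^{-r}(x)` for the least `r ≥ 1` such that
`e(Δ♣_{σ^{-r}(x)}) ≠ e(Δ_{σ^{-r}(x)})`, and `x^∨ = j_{𝔡(x)}` if no such `r` exists. -/
def VeeSpec (d : Fin D.n ⊕ Fin D.l → ℤ) (σ : Equiv.Perm (Fin D.n ⊕ Fin D.l))
    (vee : Fin D.n ⊕ Fin D.l → Fin D.n ⊕ Fin D.l) : Prop :=
  ∀ x : Fin D.n ⊕ Fin D.l,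
    ((∃ r : ℕ, 1 ≤ r ∧ D.breaksEnd σ ((⇑σ.symm)^[r] x)) →
      ∃ r : ℕ, 1 ≤ r ∧ vee x = (⇑σ.symm)^[r] x ∧ D.breaksEnd σ ((⇑σ.symm)^[r] x) ∧
        ∀ r' : ℕ, 1 ≤ r' → r' < r → ¬ D.breaksEnd σ ((⇑σ.symm)^[r'] x)) ∧
    ((¬ ∃ r : ℕ, 1 ≤ r ∧ D.breaksEnd σ ((⇑σ.symm)^[r] x)) →
      ∃ t : Fin D.l, (t : ℤ) = d x ∧ vee x = Sum.inr t)

/-- The multisegment `𝔪` of the data. -/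
def mSeg : Multiset Segment := Multiset.map D.iseg Finset.univ.val

/-- The ladder multisegment `𝔩` of the data. -/
def lSeg : Multiset Segment := Multiset.map D.jseg Finset.univ.val

end KVData

/-!
Fix `i ∈ I`.  Indices of `I` of equal depth are never related by `≪`, so along a cycle
`j_t → i_1 → … → i_s → j_t` the begin points of `j_t, i_1, …, i_s` weakly decrease and the end
points of `i_1, …, i_s, j_t` weakly increase.  Hence at most one step of the cycle enters the end
point `e(Δ_i)` from below (or from `j_t`) and at most one step leaves it upwards.  The entering step
is counted by `ν₁` or `ν₃` when its source has begin point at least `b(Δ_i)`, and the leaving step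
by `ν₂` when its source has begin point greater than `b(Δ_i)`.

The cycle of `i` has a counted entering step but no counted leaving step.  On every other cycle a
counted leaving step is preceded by a counted entering step, and conversely:
* on a cycle deeper than `i` no entering step is counted, because that cycle contains a segment
  `≪ Δ_i`, so it has passed `b(Δ_i)` before reaching the end point `e(Δ_i)`;
* on a shallower cycle, if the leaving step were not counted, its source would lie weakly below
  `Δ_i`, so that some segment `≪ Δ_i` would have the depth of `i`.
-/

namespace KnuthViennot

open Sum (inl inr)
open OrderDual (toDual)

theorem ncard_preimage_inl_add_ncard_preimage_inr {ι κ : Type*} {S : Set (ι ⊕ κ)}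
    (hS : S.Finite) : (inl ⁻¹' S).ncard + (inr ⁻¹' S).ncard = S.ncard := by
  conv_rhs => rw [← Set.image_preimage_inl_union_image_preimage_inr S]
  rw [Set.ncard_union_eq Set.disjoint_image_inl_image_inr
      ((hS.preimage Sum.inl_injective.injOn).image _)
      ((hS.preimage Sum.inr_injective.injOn).image _),
    Set.ncard_image_of_injective _ Sum.inl_injective,
    Set.ncard_image_of_injective _ Sum.inr_injective]

/-! ### Depth functions and cycles -/

section Definitions

variable {ι κ α β : Type*}

/-- `d` is a depth function on segments indexed by `ι` over a ladder indexed by `κ`.  The segments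
of both families have begin points `b` and end points `e`.  For integral segments and `κ = Fin l`
these four properties characterise the function `𝔡`, as `⁻Δ ≪ Δ'` means that `b(Δ) ≤ b(Δ')` and
`e(Δ) ≤ e(Δ')`. -/
structure IsDepth [Preorder κ] [Preorder α] [Preorder β]
    (b : ι ⊕ κ → α) (e : ι ⊕ κ → β) (d : ι → κ) : Prop where
  lt_of_ll : ∀ ⦃x y⦄, b (inl y) < b (inl x) → e (inl y) < e (inl x) → d x < d y
  b_le : ∀ x, b (inl x) ≤ b (inr (d x))
  e_le : ∀ x, e (inl x) ≤ e (inr (d x))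
  exists_ll : ∀ ⦃x t⦄, d x < t → b (inl x) ≤ b (inr t) → e (inl x) ≤ e (inr t) →
    ∃ y, b (inl y) < b (inl x) ∧ e (inl y) < e (inl x) ∧ d y = t

/-- The depth on `I ⊔ J`, extending a depth function on `I` by `𝔡(j_t) = t`. -/
def fullDepth (d : ι → κ) : ι ⊕ κ → κ := Sum.elim d id

/-- The elements of `I` that come after `s` in its cycle `j_t → i_1 → … → i_s → j_t`: the indices
below `s` of the same depth, where `j_t` counts as the top of the fibre. -/
def fiberBelow [LT ι] (d : ι → κ) : ι ⊕ κ → Set ι :=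
  Sum.elim (fun x => {y | y < x ∧ d y = d x}) (fun t => {y | d y = t})

/-- `σ` runs down each fibre of the depth, from `j_t` through the elements of `I` of depth `t` in
decreasing order and back to `j_t`. -/
def IsFiberCycle [Preorder ι] (d : ι → κ) (σ : ι ⊕ κ → ι ⊕ κ) : Prop :=
  ∀ s, (∃ y, IsGreatest (fiberBelow d s) y ∧ σ s = inl y) ∨
    (fiberBelow d s = ∅ ∧ σ s = inr (fullDepth d s))

theorem depth_eq_of_mem_fiberBelow [LT ι] {d : ι → κ} {s : ι ⊕ κ} {x : ι}
    (hx : x ∈ fiberBelow d s) : d x = fullDepth d s := by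
  cases s with
  | inl y => exact hx.2
  | inr t => exact hx

/-- The end points met after `s` in its cycle, up to and including the return to `j_t`. -/
def laterEnds [LT ι] (e : ι ⊕ κ → β) (d : ι → κ) (s : ι ⊕ κ) : Set β :=
  insert (e (inr (fullDepth d s))) ((fun y => e (inl y)) '' fiberBelow d s)

/-- The second coordinates of `(ν₁ ∪ ν₃) ∩ ({i} × (I ⊔ J))`, where `c s` stands for `e(Δ♣_s)`. -/
def entering [Preorder α] [Preorder β] (b : ι ⊕ κ → α) (e c : ι ⊕ κ → β) (i : ι) :
    Set (ι ⊕ κ) :=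
  {s | b (inl i) ≤ b s ∧ (∀ x, s = inl x → e (inl x) < c s) ∧ c s = e (inl i)}

/-- The second coordinates of `ν₂ ∩ ({i} × I)`, where `c s` stands for `e(Δ♣_s)`. -/
def leaving [Preorder α] [Preorder β] (b : ι ⊕ κ → α) (e c : ι ⊕ κ → β) (i : ι) : Set ι :=
  {x | b (inl i) < b (inl x) ∧ e (inl i) = e (inl x) ∧ e (inl x) < c (inl x)}

end Definitions

section Fibers

variable {ι κ α β : Type*} [LinearOrder ι] [Preorder α] [Preorder β]
  {b : ι ⊕ κ → α} {e c : ι ⊕ κ → β} {d : ι → κ} {i : ι}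

theorem mem_fiberBelow_of_begin_lt (hb : Monotone fun x => b (inl x)) {s : ι ⊕ κ} {x : ι}
    (hbegin : b (inl x) < b s) (hdepth : d x = fullDepth d s) : x ∈ fiberBelow d s := by
  cases s with
  | inl y => exact ⟨hb.reflect_lt hbegin, hdepth⟩
  | inr t => exact hdepth

theorem fullDepth_injOn_entering (hc : ∀ s, IsLeast (laterEnds e d s) (c s)) :
    Set.InjOn (fullDepth d) (entering b e c i) := by
  have not_below : ∀ s ∈ entering b e c i, ∀ x, inl x ∈ entering b e c i → x ∉ fiberBelow d s := by
    rintro s ⟨-, -, hs⟩ x ⟨-, hlt, hx⟩ hmem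
    have hle : c s ≤ e (inl x) := (hc s).2 (Or.inr ⟨x, hmem, rfl⟩)
    exact (hlt x rfl).not_ge (hx.trans_le (hs.symm.trans_le hle))
  rintro (x | t) hs (y | u) hs' hdepth
  · rcases lt_trichotomy x y with hxy | rfl | hyx
    · exact absurd ⟨hxy, hdepth⟩ (not_below _ hs' x hs)
    · rfl
    · exact absurd ⟨hyx, hdepth.symm⟩ (not_below _ hs y hs')
  · exact absurd hdepth (not_below _ hs' x hs)
  · exact absurd hdepth.symm (not_below _ hs y hs')
  · exact congrArg inr hdepth

theorem depth_injOn_leaving (hc : ∀ s, IsLeast (laterEnds e d s) (c s)) :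
    Set.InjOn d (leaving b e c i) := by
  have not_below : ∀ x ∈ leaving b e c i, ∀ y ∈ leaving b e c i, d x = d y → ¬ x < y := by
    rintro x ⟨-, hx, -⟩ y ⟨-, hy, hlt⟩ hdepth hxy
    have hle : c (inl y) ≤ e (inl x) := (hc _).2 (Or.inr ⟨x, ⟨hxy, hdepth⟩, rfl⟩)
    exact hlt.not_ge (hle.trans_eq (hx.symm.trans hy))
  intro x hx y hy hdepth
  exact le_antisymm (not_lt.1 (not_below y hy x hx hdepth.symm))
    (not_lt.1 (not_below x hx y hy hdepth))

theorem depth_notMem_image_leaving (hb : Monotone fun x => b (inl x))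
    (hc : ∀ s, IsLeast (laterEnds e d s) (c s)) : d i ∉ d '' leaving b e c i := by
  rintro ⟨y, ⟨hbegin, hend, hlt⟩, hdepth⟩
  have hle : c (inl y) ≤ e (inl i) :=
    (hc _).2 (Or.inr ⟨i, mem_fiberBelow_of_begin_lt hb hbegin hdepth.symm, rfl⟩)
  exact hlt.not_ge (hle.trans_eq hend)

end Fibers

section Dominance

variable {ι κ α β : Type*} {b : ι ⊕ κ → α} {e : ι ⊕ κ → β} {d : ι → κ}

theorem IsDepth.begin_le_ladder [Preorder κ] [Preorder α] [Preorder β] (hd : IsDepth b e d)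
    (s : ι ⊕ κ) : b s ≤ b (inr (fullDepth d s)) := by
  cases s with
  | inl x => exact hd.b_le x
  | inr t => exact le_rfl

theorem IsDepth.begin_lt_of_depth_lt [Preorder κ] [LinearOrder α] [Preorder β]
    (hd : IsDepth b e d) {i x : ι} (hlt : d x < d i) (hend : e (inl x) = e (inl i)) :
    b (inl i) < b (inl x) := by
  by_contra! hbegin
  obtain ⟨y, hby, hey, hdy⟩ :=
    hd.exists_ll hlt (hbegin.trans (hd.b_le i)) (hend.trans_le (hd.e_le i))
  exact (hd.lt_of_ll (hby.trans_le hbegin) (hend ▸ hey)).ne hdy.symm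

theorem IsDepth.begin_le_of_mem_fiberBelow [Preorder ι] [Preorder κ] [Preorder α]
    [Preorder β] (hd : IsDepth b e d) (hb : Monotone fun x => b (inl x))
    {s : ι ⊕ κ} {x : ι} (hx : x ∈ fiberBelow d s) : b (inl x) ≤ b s := by
  cases s with
  | inl y => exact hb hx.1.le
  | inr t => exact (hd.b_le x).trans_eq (congrArg (fun u => b (inr u)) hx)

end Dominance

section Cycles

variable {ι κ α β : Type*} [LinearOrder ι] [Preorder κ] [LinearOrder α] [LinearOrder β]
  {b : ι ⊕ κ → α} {e : ι ⊕ κ → β} {d : ι → κ}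

theorem IsDepth.end_anti_of_depth_eq (hd : IsDepth b e d)
    (hord : Monotone fun x => toLex (b (inl x), toDual (e (inl x)))) {x y : ι} (hxy : x ≤ y)
    (hdepth : d x = d y) : e (inl y) ≤ e (inl x) := by
  rcases Prod.Lex.toLex_le_toLex.1 (hord hxy) with hb | ⟨-, he⟩
  · exact not_lt.1 fun he => (hd.lt_of_ll hb he).ne hdepth.symm
  · exact he

theorem IsFiberCycle.isLeast_laterEnds {σ : ι ⊕ κ → ι ⊕ κ} (hσ : IsFiberCycle d σ)
    (hd : IsDepth b e d) (hord : Monotone fun x => toLex (b (inl x), toDual (e (inl x))))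
    (s : ι ⊕ κ) : IsLeast (laterEnds e d s) (e (σ s)) := by
  rcases hσ s with ⟨y, hy, hs⟩ | ⟨hempty, hs⟩
  · have hdy := depth_eq_of_mem_fiberBelow hy.1
    rw [hs]
    refine ⟨Or.inr ⟨y, hy.1, rfl⟩, ?_⟩
    rintro _ (rfl | ⟨z, hz, rfl⟩)
    · exact hdy ▸ hd.e_le y
    · exact hd.end_anti_of_depth_eq hord (hy.2 hz) ((depth_eq_of_mem_fiberBelow hz).trans hdy.symm)
  · simp [hs, laterEnds, hempty]

/-! ### Entering and leaving an end point -/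

variable {c : ι ⊕ κ → β}

/-- The source of the entering step is the lowest index of the cycle whose end point is below
`e(Δ_i)`, or `j_t` if there is none. -/
theorem IsDepth.depth_mem_image_entering [Finite ι] (hd : IsDepth b e d)
    (hord : Monotone fun x => toLex (b (inl x), toDual (e (inl x))))
    (hc : ∀ s, IsLeast (laterEnds e d s) (c s)) {i x : ι} (hbegin : b (inl i) ≤ b (inl x))
    (hend : e (inl x) = e (inl i)) : d x ∈ fullDepth d '' entering b e c i := by
  have hb : Monotone fun x => b (inl x) := Prod.Lex.monotone_fst_ofLex.comp hord
  obtain ⟨s, hxs, hlow, hhigh⟩ : ∃ s, x ∈ fiberBelow d s ∧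
      (∀ y, s = inl y → e (inl y) < e (inl i)) ∧ ∀ z ∈ fiberBelow d s, e (inl i) ≤ e (inl z) := by
    by_cases hex : ∃ y, d y = d x ∧ e (inl y) < e (inl i)
    · obtain ⟨y, ⟨hdy, hey⟩, hmin⟩ := Set.exists_min_image _ id (Set.toFinite _) hex
      have hxy : x < y := not_le.1 fun hyx =>
        hey.not_ge (hend.symm.trans_le (hd.end_anti_of_depth_eq hord hyx hdy))
      refine ⟨inl y, ⟨hxy, hdy.symm⟩, fun _ h => Sum.inl_injective h ▸ hey, fun z hz => ?_⟩
      exact not_lt.1 fun hez => hz.1.not_ge (hmin z ⟨hz.2.trans hdy, hez⟩)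
    · exact ⟨inr (d x), rfl, by simp, fun z hz => not_lt.1 fun hez => hex ⟨z, hz, hez⟩⟩
  have hdepth := depth_eq_of_mem_fiberBelow hxs
  have hcs : c s = e (inl i) := by
    refine le_antisymm (hend ▸ (hc s).2 (Or.inr ⟨x, hxs, rfl⟩)) ?_
    rcases (hc s).1 with h | ⟨z, hz, h⟩
    · exact h ▸ hdepth ▸ hend ▸ hd.e_le x
    · exact h ▸ hhigh z hz
  exact ⟨s, ⟨hbegin.trans (hd.begin_le_of_mem_fiberBelow hb hxs),
    fun y hy => hcs ▸ hlow y hy, hcs⟩, hdepth.symm⟩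

/-- The source of the leaving step is the lowest index of the cycle with end point `e(Δ_i)`. -/
theorem IsDepth.fullDepth_mem_image_leaving [Finite ι] (hd : IsDepth b e d)
    (hord : Monotone fun x => toLex (b (inl x), toDual (e (inl x))))
    (hladder : StrictAnti fun t => e (inr t)) (hc : ∀ s, IsLeast (laterEnds e d s) (c s))
    {i : ι} {s : ι ⊕ κ} (hs : s ∈ entering b e c i) (hlt : fullDepth d s < d i) :
    fullDepth d s ∈ d '' leaving b e c i := by
  have hladder_lt : e (inl i) < e (inr (fullDepth d s)) := (hd.e_le i).trans_lt (hladder hlt)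
  have hrun : ∃ x, d x = fullDepth d s ∧ e (inl x) = e (inl i) := by
    rcases (hc s).1 with h | ⟨x, hx, h⟩
    · exact absurd (hs.2.2.symm.trans h) hladder_lt.ne
    · exact ⟨x, depth_eq_of_mem_fiberBelow hx, h.trans hs.2.2⟩
  obtain ⟨x, ⟨hdx, hex⟩, hmin⟩ := Set.exists_min_image _ id (Set.toFinite _) hrun
  refine ⟨x, ⟨hd.begin_lt_of_depth_lt (hdx.trans_lt hlt) hex, hex.symm, ?_⟩, hdx⟩
  rcases (hc (inl x)).1 with h | ⟨z, ⟨hzx, hdz⟩, h⟩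
  · rw [h, hex, fullDepth, Sum.elim_inl, hdx]
    exact hladder_lt
  · rw [← h]
    refine (hd.end_anti_of_depth_eq hord hzx.le hdz).lt_of_ne fun heq => ?_
    exact hzx.not_ge (hmin z ⟨hdz.trans hdx, heq.symm.trans hex⟩)

end Cycles

/-! ### Counting depths -/

section Counting

variable {ι κ α β : Type*} [LinearOrder ι] [LinearOrder κ] [LinearOrder α]
  {b : ι ⊕ κ → α} {e c : ι ⊕ κ → β} {d : ι → κ}

theorem IsDepth.fullDepth_le_of_mem_entering [Preorder β] (hd : IsDepth b e d)
    (hb : Monotone fun x => b (inl x)) (hc : ∀ s, IsLeast (laterEnds e d s) (c s)) {i : ι}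
    {s : ι ⊕ κ} (hs : s ∈ entering b e c i) : fullDepth d s ≤ d i := by
  obtain ⟨hbegin, -, hend⟩ := hs
  by_contra! hlt
  obtain ⟨z, hbz, hez, hdz⟩ := hd.exists_ll hlt (hbegin.trans (hd.begin_le_ladder s))
    (hend ▸ (hc s).2 (Set.mem_insert _ _))
  have hle : c s ≤ e (inl z) :=
    (hc s).2 (Or.inr ⟨z, mem_fiberBelow_of_begin_lt hb (hbz.trans_le hbegin) hdz, rfl⟩)
  exact hez.not_ge (hend ▸ hle)

variable [LinearOrder β]

theorem IsDepth.image_entering_eq [Finite ι] (hd : IsDepth b e d)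
    (hord : Monotone fun x => toLex (b (inl x), toDual (e (inl x))))
    (hladder : StrictAnti fun t => e (inr t)) (hc : ∀ s, IsLeast (laterEnds e d s) (c s)) (i : ι) :
    fullDepth d '' entering b e c i = insert (d i) (d '' leaving b e c i) := by
  have hb : Monotone fun x => b (inl x) := Prod.Lex.monotone_fst_ofLex.comp hord
  apply Set.Subset.antisymm
  · rintro _ ⟨s, hs, rfl⟩
    exact (hd.fullDepth_le_of_mem_entering hb hc hs).eq_or_lt.imp id
      (hd.fullDepth_mem_image_leaving hord hladder hc hs)
  · rintro _ (rfl | ⟨x, hx, rfl⟩)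
    · exact hd.depth_mem_image_entering hord hc le_rfl rfl
    · exact hd.depth_mem_image_entering hord hc hx.1.le hx.2.1.symm

theorem IsDepth.finite_entering [Finite ι] (hd : IsDepth b e d)
    (hord : Monotone fun x => toLex (b (inl x), toDual (e (inl x))))
    (hladder : StrictAnti fun t => e (inr t)) (hc : ∀ s, IsLeast (laterEnds e d s) (c s)) (i : ι) :
    (entering b e c i).Finite := by
  refine Set.Finite.of_finite_image ?_ (fullDepth_injOn_entering hc)
  rw [hd.image_entering_eq hord hladder hc i]
  exact Set.toFinite _

theorem IsDepth.ncard_entering [Finite ι] (hd : IsDepth b e d)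
    (hord : Monotone fun x => toLex (b (inl x), toDual (e (inl x))))
    (hladder : StrictAnti fun t => e (inr t)) (hc : ∀ s, IsLeast (laterEnds e d s) (c s)) (i : ι) :
    (entering b e c i).ncard = (leaving b e c i).ncard + 1 := by
  have hb : Monotone fun x => b (inl x) := Prod.Lex.monotone_fst_ofLex.comp hord
  rw [← (fullDepth_injOn_entering hc).ncard_image, hd.image_entering_eq hord hladder hc i,
    Set.ncard_insert_of_notMem (depth_notMem_image_leaving hb hc) (Set.toFinite _),
    (depth_injOn_leaving hc).ncard_image]

end Counting

end KnuthViennot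

open Sum (inl inr) in
theorem D_invariant_local_general {ι κ α β : Type*} [LinearOrder ι] [Finite ι] [LinearOrder κ]
    [LinearOrder α] [LinearOrder β] {b : ι ⊕ κ → α} {e : ι ⊕ κ → β} {d : ι → κ}
    {σ : ι ⊕ κ → ι ⊕ κ}
    (hord : Monotone fun x => toLex (b (inl x), OrderDual.toDual (e (inl x))))
    (hladder : StrictAnti fun t => e (inr t)) (hd : KnuthViennot.IsDepth b e d)
    (hσ : KnuthViennot.IsFiberCycle d σ) (i : ι) :
    ({x | b (inl i) ≤ b (inl x) ∧ e (inl x) < e (σ (inl x)) ∧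
          e (σ (inl x)) = e (inl i)}.ncard : ℤ)
      - {x | b (inl i) < b (inl x) ∧ e (inl i) = e (inl x) ∧ e (inl x) < e (σ (inl x))}.ncard
      + {t | b (inl i) ≤ b (inr t) ∧ e (σ (inr t)) = e (inl i)}.ncard = 1 := by
  have hc := hσ.isLeast_laterEnds hd hord
  have hcount := hd.ncard_entering hord hladder hc i
  have hsplit := KnuthViennot.ncard_preimage_inl_add_ncard_preimage_inr
    (hd.finite_entering hord hladder hc i)
  simp only [KnuthViennot.entering, KnuthViennot.leaving, Set.preimage_ofPred_eq, Sum.inl.injEq,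
    forall_eq', reduceCtorEq, IsEmpty.forall_iff, implies_true, true_and] at hcount hsplit
  omega

namespace KVData

variable {D : KVData} {d' : Fin D.n → ℕ} {d : Fin D.n ⊕ Fin D.l → ℤ}

/-! ### The depth function and the permutation of a permissible pair -/

theorem monotone_toLex_iseg (D : KVData) :
    Monotone fun x => toLex ((D.iseg x).b, OrderDual.toDual (D.iseg x).e) :=
  monotone_iff_forall_lt.2 fun x y hxy => Prod.Lex.toLex_le_toLex.2 (D.iOrder y x hxy)

theorem antitone_jseg_b (D : KVData) : Antitone fun t => (D.jseg t).b :=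
  StrictAnti.antitone fun t u htu => (D.ladder t u htu).1

theorem strictAnti_jseg_e (D : KVData) : StrictAnti fun t => (D.jseg t).e :=
  fun t u htu => (D.ladder t u htu).2

theorem DepthSpec.le_dPrime_iff (hdep : D.DepthSpec d' d) {x : Fin D.n} {t : Fin D.l} :
    (t : ℕ) ≤ d' x ↔ (D.iseg x).b ≤ (D.jseg t).b ∧ (D.iseg x).e ≤ (D.jseg t).e := by
  constructor
  · intro ht
    obtain ⟨hlt, hb, he⟩ := (hdep.1 x).1
    have hle : t ≤ ⟨d' x, hlt⟩ := ht
    exact ⟨(Int.sub_one_lt_iff.1 hb).trans (D.antitone_jseg_b hle),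
      (Int.sub_one_lt_iff.1 he).trans (D.strictAnti_jseg_e.antitone hle)⟩
  · exact fun ⟨hb, he⟩ => (hdep.1 x).2 ⟨t.2, Int.sub_one_lt_iff.2 hb, Int.sub_one_lt_iff.2 he⟩

theorem DepthSpec.depth_le (hdep : D.DepthSpec d' d) (x : Fin D.n) : d (Sum.inl x) ≤ d' x :=
  (hdep.2.1 x).2 ⟨0, fun _ => x, rfl, by simp, by simp⟩

theorem DepthSpec.depth_lt_of_ll (hdep : D.DepthSpec d' d) {x y : Fin D.n}
    (hyx : Segment.ll (D.iseg y) (D.iseg x)) : d (Sum.inl x) < d (Sum.inl y) := by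
  obtain ⟨k, c, h0, hc, hz⟩ := (hdep.2.1 y).1
  -- Prepend `x` to a chain realising the depth of `y`.
  have hmem : d (Sum.inl y) - 1 ∈ D.depthSet d' x := by
    refine ⟨k + 1, fun r => Nat.casesOn r x c, rfl, ?_, ?_⟩
    · rintro (_ | r) hr
      · simpa [h0] using hyx
      · exact hc r (by omega)
    · rw [hz]
      push_cast
      ring
  have := (hdep.2.1 x).2 hmem
  omega

theorem DepthSpec.exists_ll_depth_eq_add_one (hdep : D.DepthSpec d' d) {x : Fin D.n}
    (hx : d (Sum.inl x) < d' x) :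
    ∃ y, Segment.ll (D.iseg y) (D.iseg x) ∧ d (Sum.inl y) = d (Sum.inl x) + 1 := by
  obtain ⟨k, c, rfl, hc, hz⟩ := (hdep.2.1 x).1
  cases k with
  | zero => omega
  | succ k =>
    have hll : Segment.ll (D.iseg (c 1)) (D.iseg (c 0)) := hc 0 k.succ_pos
    have htail : (d' (c (k + 1)) : ℤ) - k ∈ D.depthSet d' (c 1) :=
      ⟨k, fun r => c (r + 1), rfl, fun r hr => hc (r + 1) (by omega), rfl⟩
    have hle := (hdep.2.1 (c 1)).2 htail
    have hlt := hdep.depth_lt_of_ll hll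
    exact ⟨c 1, hll, by omega⟩

/-- An intermediate value property: along a chain realising the depth of `x`, the depth takes every
value `t` for which `Δ_{j_t}` still dominates `Δ_x`. -/
theorem DepthSpec.exists_ll_depth_eq (hdep : D.DepthSpec d' d) {x : Fin D.n} {t : Fin D.l}
    (hlt : d (Sum.inl x) < t) (hle : (t : ℕ) ≤ d' x) :
    ∃ y, Segment.ll (D.iseg y) (D.iseg x) ∧ d (Sum.inl y) = t := by
  obtain ⟨k, hk⟩ := Int.eq_ofNat_of_zero_le (Int.sub_nonneg_of_le hlt)
  induction k generalizing x with
  | zero =>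
    obtain ⟨y, hyx, hdy⟩ := hdep.exists_ll_depth_eq_add_one (x := x) (by omega)
    exact ⟨y, hyx, by omega⟩
  | succ k ih =>
    obtain ⟨y, hyx, hdy⟩ := hdep.exists_ll_depth_eq_add_one (x := x) (by omega)
    obtain ⟨hb, he⟩ := hdep.le_dPrime_iff.1 hle
    have hley : (t : ℕ) ≤ d' y := hdep.le_dPrime_iff.2 ⟨hyx.1.le.trans hb, hyx.2.le.trans he⟩
    obtain ⟨z, hzy, hdz⟩ := ih (x := y) (by omega) hley (by omega)
    exact ⟨z, ⟨hzy.1.trans hyx.1, hzy.2.trans hyx.2⟩, hdz⟩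

theorem DepthSpec.isDepth (hdep : D.DepthSpec d' d) {δ : Fin D.n → Fin D.l}
    (hδ : ∀ x, (δ x : ℤ) = d (Sum.inl x)) :
    KnuthViennot.IsDepth (fun s => (D.segOf s).b) (fun s => (D.segOf s).e) δ where
  lt_of_ll x y hb he := by
    have := hdep.depth_lt_of_ll (x := x) (y := y) ⟨hb, he⟩
    rw [← hδ, ← hδ] at this
    exact_mod_cast this
  b_le x := (hdep.le_dPrime_iff.1 (by exact_mod_cast (hδ x).trans_le (hdep.depth_le x))).1
  e_le x := (hdep.le_dPrime_iff.1 (by exact_mod_cast (hδ x).trans_le (hdep.depth_le x))).2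
  exists_ll x t hlt hb he := by
    obtain ⟨y, hyx, hdy⟩ := hdep.exists_ll_depth_eq (x := x) (t := t)
      (by rw [← hδ]; exact_mod_cast hlt) (hdep.le_dPrime_iff.2 ⟨hb, he⟩)
    exact ⟨y, hyx.1, hyx.2, Fin.ext (by exact_mod_cast (hδ y).trans hdy)⟩

variable {σ : Equiv.Perm (Fin D.n ⊕ Fin D.l)}

theorem SigmaSpec.exists_fin_depth (hσ : D.SigmaSpec d σ) :
    ∃ δ : Fin D.n → Fin D.l, ∀ x, (δ x : ℤ) = d (Sum.inl x) := by
  have hex (x) : ∃ t : Fin D.l, (t : ℤ) = d (Sum.inl x) := by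
    induction x using WellFoundedLT.induction with
    | ind x ih =>
      rcases hσ.1 x with ⟨y, ⟨⟨hyx, hdy⟩, -⟩, -⟩ | ⟨-, t, ht, -⟩
      · exact hdy ▸ ih y hyx
      · exact ⟨t, ht⟩
  choose δ hδ using hex
  exact ⟨δ, hδ⟩

theorem SigmaSpec.isFiberCycle (hσ : D.SigmaSpec d σ) {δ : Fin D.n → Fin D.l}
    (hδ : ∀ x, (δ x : ℤ) = d (Sum.inl x)) : KnuthViennot.IsFiberCycle δ σ := by
  have hfiber (x t) : d (Sum.inl x) = (t : Fin D.l) ↔ δ x = t := by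
    rw [← hδ, Nat.cast_inj, Fin.val_inj]
  rintro (x | t)
  · rcases hσ.1 x with ⟨y, hy, hs⟩ | ⟨hempty, t, ht, hs⟩
    · exact Or.inl ⟨y, by
        simpa only [KnuthViennot.fiberBelow, Sum.elim_inl, ← hδ x, hfiber] using hy, hs⟩
    · refine Or.inr ⟨Set.eq_empty_of_forall_notMem fun y hy => hempty ⟨y, hy.1, ?_⟩, ?_⟩
      · rw [← hδ x, hfiber]
        exact hy.2
      · exact hs.trans (congrArg Sum.inr ((hfiber x t).1 ht.symm).symm)
  · rcases hσ.2 t with ⟨y, hy, hs⟩ | ⟨hempty, hs⟩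
    · exact Or.inl ⟨y, by
        simpa only [KnuthViennot.fiberBelow, Sum.elim_inr, hfiber] using hy, hs⟩
    · exact Or.inr ⟨Set.eq_empty_of_forall_notMem fun y hy => hempty ⟨y, (hfiber y t).2 hy⟩, hs⟩

end KVData

/-- Let `(𝔩,𝔪)` be a permissible pair with the algorithm notations in
place.  Then for each fixed `i ∈ I` the local count
`D_i(𝔩,𝔪) = |ν(𝔩,𝔪)₁ ∩ ({i}×I)| - |ν(𝔩,𝔪)₂ ∩ ({i}×I)| + |ν(𝔩,𝔪)₃ ∩ ({i}×J)|`
equals `1` (recall `e(Δ♣_x) = e(Δ_{σ(x)})` and `b(Δ♣_x) = b(Δ_x)`). -/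
theorem D_invariant_local (D : KVData) (d' : Fin D.n → ℕ)
    (d : Fin D.n ⊕ Fin D.l → ℤ) (σ : Equiv.Perm (Fin D.n ⊕ Fin D.l))
    (hdep : D.DepthSpec d' d) (hσ : D.SigmaSpec d σ) (i : Fin D.n) :
    (({i₂ : Fin D.n |
        (D.iseg i).b ≤ (D.iseg i₂).b ∧
        (D.iseg i₂).e < (D.segOf (σ (Sum.inl i₂))).e ∧
        (D.segOf (σ (Sum.inl i₂))).e = (D.iseg i).e}.ncard : ℤ)
      - ({i₂ : Fin D.n |
        (D.iseg i).b < (D.iseg i₂).b ∧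
        (D.iseg i).e = (D.iseg i₂).e ∧
        (D.iseg i₂).e < (D.segOf (σ (Sum.inl i₂))).e}.ncard : ℤ)
      + ({j : Fin D.l |
        (D.iseg i).b ≤ (D.jseg j).b ∧
        (D.segOf (σ (Sum.inr j))).e = (D.iseg i).e}.ncard : ℤ)) = 1 := by
  obtain ⟨δ, hδ⟩ := hσ.exists_fin_depth
  exact D_invariant_local_general D.monotone_toLex_iseg D.strictAnti_jseg_e (hdep.isDepth hδ)
    (hσ.isFiberCycle hδ) i
end

section
/- Let (𝔩,𝔩') be a permissible pair in which both 𝔩 and 𝔩' are ladder multisegments. Write 𝔩 = Δ(c_1, d_1 − 1) + … + Δ(c_λ, d_λ − 1) with c_1 > … > c_λ and d_1 > … > d_λ, and 𝔩' = Δ(c'_1, d'_1 − 1) + … + Δ(c'_{λ'}, d'_{λ'} − 1) with c'_1 > … > c'_{λ'} and d'_1 > … > d'_{λ'}. Then λ' ≤ λ, and c'_j ≤ c_j and d'_j ≤ d_j for all 1 ≤ j ≤ λ'. -/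
theorem card_Iio_le_card_Iio_of_strictMono {α β : Type*} [LinearOrder α] [Preorder β]
    [LocallyFiniteOrderBot α] [LocallyFiniteOrderBot β] {f : α → β} (hf : StrictMono f) (a : α) :
    (Finset.Iio a).card ≤ (Finset.Iio (f a)).card :=
  Finset.card_le_card_of_injOn f
    (fun _ hx => by simpa using hf (Finset.mem_Iio.1 hx)) hf.injective.injOn

theorem Segment.endpoints_le_of_shiftDown_prec {Δ₁ Δ₂ : Segment} (h : Δ₁.shiftDown.prec Δ₂) :
    Δ₁.b ≤ Δ₂.b ∧ Δ₁.e ≤ Δ₂.e :=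
  ⟨Int.le_of_sub_one_lt h.1, Int.le_of_sub_one_lt h.2.1⟩

theorem ladder_pair_tableau_bounds_general {lam lam' : ℕ}
    {segJ : Fin lam → Segment} {segI : Fin lam' → Segment}
    (hJb : Antitone fun j => (segJ j).b) (hJe : Antitone fun j => (segJ j).e)
    {φ : Fin lam' → Fin lam} (hφ : StrictMono φ)
    (hprec : ∀ j, (segI j).shiftDown.prec (segJ (φ j))) :
    ∃ hle : lam' ≤ lam, ∀ j : Fin lam',
      (segI j).b ≤ (segJ (Fin.castLE hle j)).b ∧ (segI j).e ≤ (segJ (Fin.castLE hle j)).e := by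
  have hle : lam' ≤ lam := Fin.le_of_injective φ hφ.injective
  refine ⟨hle, fun j => ?_⟩
  have hj : Fin.castLE hle j ≤ φ j := by
    simpa [Fin.le_def] using card_Iio_le_card_Iio_of_strictMono hφ j
  obtain ⟨hb, he⟩ := Segment.endpoints_le_of_shiftDown_prec (hprec j)
  exact ⟨hb.trans (hJb hj), he.trans (hJe hj)⟩

/-- Let `(𝔩, 𝔩')` be a permissible pair in which both `𝔩` and `𝔩'`
are ladder multisegments, written `𝔩 = Δ(c_1, d_1 - 1) + ⋯ + Δ(c_λ, d_λ - 1)` with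
`c_1 > ⋯ > c_λ`, `d_1 > ⋯ > d_λ`, and `𝔩' = Δ(c'_1, d'_1 - 1) + ⋯ + Δ(c'_{λ'}, d'_{λ'} - 1)`
with `c'_1 > ⋯ > c'_{λ'}`, `d'_1 > ⋯ > d'_{λ'}` (here the ladders are recorded by the
functions `segJ j = Δ(c_{j+1}, d_{j+1} - 1)` and `segI j = Δ(c'_{j+1}, d'_{j+1} - 1)`, so
that begin and end points are strictly decreasing in `j`).  Then `λ' ≤ λ`, and
`c'_j ≤ c_j`, `d'_j ≤ d_j` for all `1 ≤ j ≤ λ'`. -/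
theorem ladder_pair_tableau_bounds (lam lam' : ℕ) (hlam : 0 < lam) (hlam' : 0 < lam')
    (segJ : Fin lam → Segment) (segI : Fin lam' → Segment)
    (hJb : StrictAnti fun j => (segJ j).b) (hJe : StrictAnti fun j => (segJ j).e)
    (hIb : StrictAnti fun j => (segI j).b) (hIe : StrictAnti fun j => (segI j).e)
    (hperm : ∀ (m : ℕ) (c : Fin m → Fin lam'),
      (∀ r s : Fin m, r < s → Segment.ll (segI (c s)) (segI (c r))) →
      ∃ φ : Fin m → Fin lam, StrictMono φ ∧
        ∀ t : Fin m, Segment.prec (Segment.shiftDown (segI (c t))) (segJ (φ t))) :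
    ∃ hle : lam' ≤ lam, ∀ j : Fin lam',
      (segI j).b ≤ (segJ (Fin.castLE hle j)).b ∧ (segI j).e ≤ (segJ (Fin.castLE hle j)).e := by
  obtain ⟨φ, hφ, hprec⟩ := hperm lam' id fun _ _ hrs => ⟨hIb hrs, hIe hrs⟩
  exact ladder_pair_tableau_bounds_general hJb.antitone hJe.antitone hφ hprec
end

section
/- Let (𝔩,𝔪) be a permissible pair with the algorithm notations in place. Then: (a) for every i ∈ I, e(Δ_i) ≤ e(Δ_{i_#}) (equivalently, e(Δ_i) ≤ e(Δ♣_i)); (b) for every j ∈ J, e(Δ_{j_#}) ≤ e(Δ_j); (c) for every i ∈ I∪J, e(Δ♣_{i^∨}) = e(Δ_i). -/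
theorem apply_symm_iterate_eq {α ε : Type*} {f : α → ε} {σ : Equiv.Perm α} {x : α} {s : ℕ}
    (h : ∀ r : ℕ, 1 ≤ r → r ≤ s → f (σ (σ.symm^[r] x)) = f (σ.symm^[r] x)) :
    f (σ.symm^[s] x) = f x := by
  induction s with
  | zero => rfl
  | succ s ih =>
    calc f (σ.symm^[s + 1] x) = f (σ (σ.symm^[s + 1] x)) := (h _ (by omega) le_rfl).symm
      _ = f (σ.symm^[s] x) := by rw [Function.iterate_succ_apply', Equiv.apply_symm_apply]
      _ = f x := ih fun r hr hrs => h r hr (by omega)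

theorem exists_symm_iterate_eq_of_sameCycle {α : Type*} [Finite α] {σ : Equiv.Perm α} {x y : α}
    (h : σ.SameCycle x y) : ∃ s : ℕ, σ.symm^[s] x = y := by
  obtain ⟨s, hs⟩ := h.inv.exists_nat_pow_eq
  exact ⟨s, by rwa [← Equiv.Perm.iterate_eq_pow] at hs⟩

section FiberCycles

variable {I J δ ε : Type*} {d : I ⊕ J → δ} {σ : Equiv.Perm (I ⊕ J)}

/-- `σ` has the cycles `(i_1, …, i_s, j)`, where `{i_1 > … > i_s} ∪ {j}` runs over the fibers of
`d`.  For finite `I` and `d` injective on `J`, it is enough to ask that `σ` preserve `d` and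
decrease as long as it stays in `I`: every cycle then has to pass through `J`, so each fiber is
a single cycle. -/
structure CyclesFibers [LT I] (d : I ⊕ J → δ) (σ : Equiv.Perm (I ⊕ J)) : Prop where
  map_depth (x : I ⊕ J) : d (σ x) = d x
  lt_of_apply_eq {i i' : I} : σ (Sum.inl i) = Sum.inl i' → i' < i

/-- `y` is `x^∨`, where `f` plays the role of the end point: the first `σ⁻ʳ(x)` with `r ≥ 1` at
which `σ` changes `f`, or the element of `J` in the fiber of `x` if there is none. -/
def IsVee (d : I ⊕ J → δ) (f : I ⊕ J → ε) (σ : Equiv.Perm (I ⊕ J)) (x y : I ⊕ J) : Prop :=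
  (∃ r : ℕ, 1 ≤ r ∧ y = σ.symm^[r] x ∧ f (σ y) ≠ f y ∧
    ∀ r' : ℕ, 1 ≤ r' → r' < r → f (σ (σ.symm^[r'] x)) = f (σ.symm^[r'] x)) ∨
  ((∀ r : ℕ, 1 ≤ r → f (σ (σ.symm^[r] x)) = f (σ.symm^[r] x)) ∧
    ∃ t : J, d (Sum.inr t) = d x ∧ y = Sum.inr t)

namespace CyclesFibers

theorem exists_sameCycle_inr [LT I] [WellFoundedLT I] (hσ : CyclesFibers d σ) (i : I) :
    ∃ t : J, d (Sum.inr t) = d (Sum.inl i) ∧ σ.SameCycle (Sum.inl i) (Sum.inr t) := by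
  induction i using WellFoundedLT.induction with
  | ind i ih =>
    have hd := hσ.map_depth (Sum.inl i)
    have hc : σ.SameCycle (Sum.inl i) (σ (Sum.inl i)) :=
      Equiv.Perm.sameCycle_apply_right.2 (.refl _ _)
    rcases hs : σ (Sum.inl i) with i' | t
    · obtain ⟨t, ht, hct⟩ := ih i' (hσ.lt_of_apply_eq hs)
      rw [hs] at hd hc
      exact ⟨t, ht.trans hd, hc.trans hct⟩
    · rw [hs] at hd hc
      exact ⟨t, hd, hc⟩

theorem sameCycle_inr [LT I] [WellFoundedLT I] (hσ : CyclesFibers d σ)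
    (hJ : Function.Injective (d ∘ Sum.inr)) {x : I ⊕ J} {t : J} (ht : d (Sum.inr t) = d x) :
    σ.SameCycle x (Sum.inr t) := by
  rcases x with i | t'
  · obtain ⟨t', ht', hc⟩ := hσ.exists_sameCycle_inr i
    rwa [hJ (ht.trans ht'.symm)]
  · rw [hJ ht]

theorem apply_vee_eq [Preorder I] [Finite I] [Finite J] (hσ : CyclesFibers d σ)
    (hJ : Function.Injective (d ∘ Sum.inr)) {f : I ⊕ J → ε} {x y : I ⊕ J}
    (hy : IsVee d f σ x y) : f (σ y) = f x := by
  rcases hy with ⟨r, hr, rfl, -, hmin⟩ | ⟨hconst, t, ht, rfl⟩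
  · obtain ⟨s, rfl⟩ := Nat.exists_eq_add_of_le' hr
    rw [Function.iterate_succ_apply', Equiv.apply_symm_apply]
    exact apply_symm_iterate_eq fun r' hr' hs => hmin r' hr' (by omega)
  · obtain ⟨s, hs⟩ := exists_symm_iterate_eq_of_sameCycle
      (Equiv.Perm.sameCycle_apply_right.2 (hσ.sameCycle_inr hJ ht))
    rw [← hs]
    exact apply_symm_iterate_eq fun r hr _ => hconst r hr

end CyclesFibers

end FiberCycles

section DepthLabelling

variable {I J δ : Type*} {iseg : I → Segment} {jseg : J → Segment} {d : I ⊕ J → δ}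
  {σ : Equiv.Perm (I ⊕ J)}

/-- `I` is ordered by begin points, ties being broken by reversed end points. -/
def IsBeginSorted [LT I] (iseg : I → Segment) : Prop :=
  ∀ i₁ i₂ : I, i₂ < i₁ →
    (iseg i₂).b < (iseg i₁).b ∨ ((iseg i₂).b = (iseg i₁).b ∧ (iseg i₁).e ≤ (iseg i₂).e)

/-- A labelling of `I ⊔ J` with the properties of the depth function `𝔡` that govern end points;
`𝔡` itself is the case of `KVData.DepthSpec`. -/
structure IsDepthLabelling [LT δ] (iseg : I → Segment) (jseg : J → Segment) (d : I ⊕ J → δ) :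
    Prop where
  lt_of_ll {i i' : I} : (iseg i').ll (iseg i) → d (Sum.inl i) < d (Sum.inl i')
  end_le_jseg {i : I} {t : J} : d (Sum.inr t) = d (Sum.inl i) → (iseg i).e ≤ (jseg t).e
  injective_inr : Function.Injective (d ∘ Sum.inr)

namespace IsDepthLabelling

theorem end_le_of_lt [LT I] [Preorder δ] (hd : IsDepthLabelling iseg jseg d)
    (hI : IsBeginSorted iseg) {i i' : I} (hlt : i' < i)
    (heq : d (Sum.inl i') = d (Sum.inl i)) : (iseg i).e ≤ (iseg i').e := by
  rcases hI i i' hlt with hb | ⟨-, he⟩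
  · by_contra! he
    exact (hd.lt_of_ll ⟨hb, he⟩).ne' heq
  · exact he

theorem end_le_end_apply_inl [LT I] [Preorder δ] (hd : IsDepthLabelling iseg jseg d)
    (hI : IsBeginSorted iseg) (hσ : CyclesFibers d σ) (i : I) :
    (iseg i).e ≤ (Sum.elim iseg jseg (σ (Sum.inl i))).e := by
  have hdσ := hσ.map_depth (Sum.inl i)
  rcases hs : σ (Sum.inl i) with i' | t <;> rw [hs] at hdσ
  · exact hd.end_le_of_lt hI (hσ.lt_of_apply_eq hs) hdσ
  · exact hd.end_le_jseg hdσ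

theorem end_apply_inr_le_end [LT δ] (hd : IsDepthLabelling iseg jseg d)
    (hdσ : ∀ x, d (σ x) = d x) (t : J) :
    (Sum.elim iseg jseg (σ (Sum.inr t))).e ≤ (jseg t).e := by
  have ht := hdσ (Sum.inr t)
  rcases hs : σ (Sum.inr t) with i | t' <;> rw [hs] at ht
  · exact hd.end_le_jseg ht.symm
  · rw [Sum.elim_inr, hd.injective_inr ht]

end IsDepthLabelling

end DepthLabelling

namespace KVData

variable {D : KVData} {d' : Fin D.n → ℕ} {d : Fin D.n ⊕ Fin D.l → ℤ}
  {σ : Equiv.Perm (Fin D.n ⊕ Fin D.l)} {vee : Fin D.n ⊕ Fin D.l → Fin D.n ⊕ Fin D.l}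

theorem sub_one_mem_depthSet {i i' : Fin D.n} {z : ℤ} (hz : z ∈ D.depthSet d' i')
    (h : (D.iseg i').ll (D.iseg i)) : z - 1 ∈ D.depthSet d' i := by
  obtain ⟨k, c, rfl, hc, rfl⟩ := hz
  refine ⟨k + 1, fun r => Nat.casesOn r i c, rfl, fun r hr => ?_, by push_cast; ring⟩
  cases r with
  | zero => exact h
  | succ r => exact hc r (by omega)

theorem self_mem_depthSet (d' : Fin D.n → ℕ) (i : Fin D.n) : (d' i : ℤ) ∈ D.depthSet d' i :=
  ⟨0, fun _ => i, rfl, by simp, by simp⟩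

theorem antitone_end_jseg (D : KVData) : Antitone fun t => (D.jseg t).e :=
  StrictAnti.antitone fun t t' h => (D.ladder t t' h).2

theorem end_le_jseg_of_le {i : Fin D.n} {s : ℕ} (hs : s ∈ D.dPrimeSet i) {t : Fin D.l}
    (hts : (t : ℕ) ≤ s) : (D.iseg i).e ≤ (D.jseg t).e := by
  obtain ⟨hsl, -, he⟩ := hs
  exact (Int.le_of_sub_one_lt he).trans (D.antitone_end_jseg (Fin.le_def.2 hts))

theorem DepthSpec.isDepthLabelling (hd : D.DepthSpec d' d) :
    IsDepthLabelling D.iseg D.jseg d := by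
  obtain ⟨hd', hdI, hdJ⟩ := hd
  refine ⟨fun {i i'} h => ?_, fun {i t} ht => ?_, fun t t' h => ?_⟩
  · exact Int.lt_of_le_sub_one ((hdI i).2 (sub_one_mem_depthSet (hdI i').1 h))
  · have hle : d (Sum.inl i) ≤ d' i := (hdI i).2 (self_mem_depthSet d' i)
    rw [← ht, hdJ, Nat.cast_le] at hle
    exact end_le_jseg_of_le (hd' i).1 hle
  · simpa [hdJ, Fin.ext_iff] using h

theorem SigmaSpec.cyclesFibers (hσ : D.SigmaSpec d σ) (hd : ∀ t, d (Sum.inr t) = (t : ℤ)) :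
    CyclesFibers d σ where
  map_depth := by
    rintro (i | t)
    · rcases hσ.1 i with ⟨i', ⟨⟨-, heq⟩, -⟩, hs⟩ | ⟨-, t, ht, hs⟩
      · rw [hs, heq]
      · rw [hs, hd, ht]
    · rcases hσ.2 t with ⟨i, ⟨hi, -⟩, hs⟩ | ⟨-, hs⟩
      · rw [hs, hd]
        exact hi
      · rw [hs]
  lt_of_apply_eq {i i'} h := by
    rcases hσ.1 i with ⟨i'', ⟨⟨hlt, -⟩, -⟩, hs⟩ | ⟨-, t, -, hs⟩
    · rwa [Sum.inl.inj (h.symm.trans hs)]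
    · exact absurd (h.symm.trans hs) Sum.inl_ne_inr

theorem VeeSpec.isVee (hvee : D.VeeSpec d σ vee) (hd : ∀ t, d (Sum.inr t) = (t : ℤ))
    (x : Fin D.n ⊕ Fin D.l) : IsVee d (fun y => (D.segOf y).e) σ x (vee x) := by
  by_cases hbreak : ∃ r : ℕ, 1 ≤ r ∧ D.breaksEnd σ (σ.symm^[r] x)
  · obtain ⟨r, hr, hv, hb, hmin⟩ := (hvee x).1 hbreak
    exact .inl ⟨r, hr, hv, hv ▸ hb, fun r' hr' hlt => not_not.1 (hmin r' hr' hlt)⟩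
  · obtain ⟨t, ht, hv⟩ := (hvee x).2 hbreak
    exact .inr ⟨fun r hr => not_not.1 fun hb => hbreak ⟨r, hr, hb⟩, t, (hd t).trans ht, hv⟩

end KVData

theorem club_end_properties_general {I J δ : Type*} [Preorder I] [Finite I] [Finite J]
    [Preorder δ] {iseg : I → Segment} {jseg : J → Segment} {d : I ⊕ J → δ}
    {σ : Equiv.Perm (I ⊕ J)} {vee : I ⊕ J → I ⊕ J} (hI : IsBeginSorted iseg)
    (hd : IsDepthLabelling iseg jseg d) (hσ : CyclesFibers d σ)
    (hvee : ∀ x, IsVee d (fun y => (Sum.elim iseg jseg y).e) σ x (vee x)) :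
    (∀ i, (iseg i).e ≤ (Sum.elim iseg jseg (σ (Sum.inl i))).e) ∧
    (∀ t, (Sum.elim iseg jseg (σ (Sum.inr t))).e ≤ (jseg t).e) ∧
    (∀ x, (Sum.elim iseg jseg (σ (vee x))).e = (Sum.elim iseg jseg x).e) :=
  ⟨hd.end_le_end_apply_inl hI hσ, hd.end_apply_inr_le_end hσ.map_depth,
    fun x => hσ.apply_vee_eq hd.injective_inr (hvee x)⟩

/-- properties of `K'`.  Let `(𝔩,𝔪)` be a permissible pair with the
algorithm notations in place.  Then: (a) for every `i ∈ I`, `e(Δ_i) ≤ e(Δ_{i_#})`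
(equivalently `e(Δ_i) ≤ e(Δ♣_i)`); (b) for every `j ∈ J`, `e(Δ_{j_#}) ≤ e(Δ_j)`;
(c) for every `x ∈ I ∪ J`, `e(Δ♣_{x^∨}) = e(Δ_x)` (recall `e(Δ♣_y) = e(Δ_{σ(y)})`). -/
theorem club_end_properties (D : KVData) (d' : Fin D.n → ℕ)
    (d : Fin D.n ⊕ Fin D.l → ℤ) (σ : Equiv.Perm (Fin D.n ⊕ Fin D.l))
    (vee : Fin D.n ⊕ Fin D.l → Fin D.n ⊕ Fin D.l)
    (hdep : D.DepthSpec d' d) (hσ : D.SigmaSpec d σ) (hvee : D.VeeSpec d σ vee) :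
    (∀ i : Fin D.n, (D.iseg i).e ≤ (D.segOf (σ (Sum.inl i))).e) ∧
    (∀ t : Fin D.l, (D.segOf (σ (Sum.inr t))).e ≤ (D.jseg t).e) ∧
    (∀ x : Fin D.n ⊕ Fin D.l, (D.segOf (σ (vee x))).e = (D.segOf x).e) :=
  club_end_properties_general D.iOrder hdep.isDepthLabelling (hσ.cyclesFibers hdep.2.2)
    (hvee.isVee hdep.2.2)
end
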